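/- arXiv:1901.05383 — 8 statements merged into one kernel-verified Lean document; each statement's English description precedes it below -/
import Mathlib

section
/- Let P be a polynomial in two variables over ℂ of total degree d ≥ 1, and let P_d be its homogeneous component of degree d. Write Z(Q) = {z ∈ ℂ² : Q(z) = 0}. For every ε > 0 and R > 0 there exists λ₀ > 0 such that for all 0 < λ < λ₀: every point z of the rescaled zero set λ·Z(P) = {λw : w ∈ Z(P)} with ‖z‖ ≤ R satisfies dist(z, Z(P_d)) < ε. -/
open MvPolynomial

/-- The zero locus in `ℂ²` (with the Euclidean metric) of a polynomial in two variables. -/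
def zeroSet (Q : MvPolynomial (Fin 2) ℂ) : Set (EuclideanSpace ℂ (Fin 2)) :=
  {z | MvPolynomial.eval (fun i => z i) Q = 0}

theorem hom_eval_scale (Q : MvPolynomial (Fin 2) ℂ) (n : ℕ) (hQ : Q.IsHomogeneous n)
    (c : ℂ) (x : Fin 2 → ℂ) : eval (fun i => c * x i) Q = c ^ n * eval x Q := by
  rw [eval_eq, eval_eq, Finset.mul_sum]
  refine Finset.sum_congr rfl fun m hm => ?_
  have h : ∑ i ∈ m.support, m i = n := by
    have := hQ (mem_support_iff.mp hm)
    rw [Finsupp.weight_apply] at this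
    simpa [Finsupp.sum] using this
  simp only [mul_pow, Finset.prod_mul_distrib, Finset.prod_pow_eq_pow_sum]
  rw [h]
  ring

/-- If `P` has total degree `d ≥ 1` with top homogeneous component `P_d`, then for
every `ε, R > 0` there is `λ₀ > 0` such that for `0 < λ < λ₀`, every point of `λ·Z(P)` of norm
at most `R` is within distance `ε` of `Z(P_d)`. -/
theorem stmt_3 (P : MvPolynomial (Fin 2) ℂ) (d : ℕ) (hd : 1 ≤ d)
    (hdeg : P.totalDegree = d) (ε R : ℝ) (hε : 0 < ε) (hR : 0 < R) :
    ∃ lam₀ > 0, ∀ lam : ℝ, 0 < lam → lam < lam₀ →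
      ∀ w : EuclideanSpace ℂ (Fin 2), w ∈ zeroSet P → ‖lam • w‖ ≤ R →
        Metric.infDist (lam • w) (zeroSet (homogeneousComponent d P)) < ε := by
  set Z := zeroSet (homogeneousComponent d P) with hZ
  let F : ℝ × EuclideanSpace ℂ (Fin 2) → ℂ := fun p =>
    ∑ k ∈ Finset.range (d + 1),
      (p.1 : ℂ) ^ (d - k) * eval (fun i => p.2 i) (homogeneousComponent k P)
  have hF : Continuous F := by
    refine continuous_finsetSum _ fun k _ => ?_
    refine Continuous.mul (by fun_prop) ?_
    exact (MvPolynomial.continuous_eval _).comp (by fun_prop)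
  have hF0 : ∀ z, F (0, z) = eval (fun i => z i) (homogeneousComponent d P) := by
    intro z
    simp only [F]
    rw [Finset.sum_range_succ, Finset.sum_eq_zero]
    · simp
    · intro k hk
      have : d - k ≠ 0 := by have := Finset.mem_range.mp hk; omega
      simp [this]
  have hFs : ∀ (t : ℝ) (w : EuclideanSpace ℂ (Fin 2)),
      F (t, t • w) = (t : ℂ) ^ d * eval (fun i => w i) P := by
    intro t w
    have hP : eval (fun i => w i) P =
        ∑ k ∈ Finset.range (d + 1), eval (fun i => w i) (homogeneousComponent k P) := by
      conv_lhs => rw [← sum_homogeneousComponent P, hdeg, map_sum]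
    rw [hP, Finset.mul_sum]
    refine Finset.sum_congr rfl fun k hk => ?_
    have hk' : k ≤ d := by have := Finset.mem_range.mp hk; omega
    have h1 := hom_eval_scale _ k (homogeneousComponent_isHomogeneous k P) (t : ℂ) (fun i => w i)
    have h2 : (fun i => (t • w) i) = fun i => (t : ℂ) * w i := by
      funext i; simp
    simp only [h2]
    rw [h1, ← mul_assoc, ← pow_add, Nat.sub_add_cancel hk']
  let K : Set (EuclideanSpace ℂ (Fin 2)) := Metric.closedBall 0 R ∩ {z | ε ≤ Metric.infDist z Z}
  have hK : IsCompact K := (isCompact_closedBall _ _).inter_right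
    (isClosed_le continuous_const (Metric.continuous_infDist_pt Z))
  have hev : ∀ᶠ t in nhds (0 : ℝ), ∀ z ∈ K, F (t, z) ≠ 0 := by
    refine hK.eventually_forall_of_forall_eventually fun z hz => ?_
    refine hF.continuousAt.eventually_ne ?_
    rw [hF0]
    intro h0
    have h1 : z ∈ Z := h0
    have h2 : ε ≤ Metric.infDist z Z := hz.2
    rw [Metric.infDist_zero_of_mem h1] at h2
    linarith
  obtain ⟨δ, hδ, hball⟩ := Metric.eventually_nhds_iff.mp hev
  refine ⟨δ, hδ, fun t ht htδ w hw hwR => ?_⟩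
  by_contra hcon
  refine hball (y := t) (by simpa [abs_of_pos ht] using htδ) (t • w)
    ⟨by simpa using hwR, not_lt.mp hcon⟩ ?_
  have hw' : eval (fun i => w i) P = 0 := hw
  rw [hFs, hw', mul_zero]
end

section
/- Let P be a nonzero polynomial in two variables over ℂ of total degree d ≥ 1, and let P_d be its homogeneous component of degree d. Then for every z ∈ Z(P_d) with z ≠ 0 and every ε > 0 there exists λ₀ > 0 such that for all 0 < λ < λ₀ there is a point w ∈ Z(P) with ‖λw − z‖ < ε; that is, every nonzero point of Z(P_d) is a limit of points of the rescaled zero sets λ·Z(P) as λ → 0. -/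
open MvPolynomial

lemma aux_term (f : Fin 2 → Polynomial ℂ) (hf : ∀ i, (f i).natDegree ≤ 1) (m : Fin 2 →₀ ℕ) :
    (∏ i, f i ^ m i).natDegree ≤ m.degree ∧
    (∏ i, f i ^ m i).coeff m.degree = ∏ i, ((f i).coeff 1) ^ m i := by
  have h : ∀ i, (f i ^ m i).natDegree ≤ m i := fun i => by
    simpa using Polynomial.natDegree_pow_le_of_le (m i) (hf i)
  have h2 : ∀ i, (f i ^ m i).coeff (m i) = ((f i).coeff 1) ^ m i := fun i => by
    simpa using Polynomial.coeff_pow_of_natDegree_le (m := m i) (hf i)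
  have hdg : m.degree = m 0 + m 1 := by
    simp [Finsupp.degree_eq_sum]
  rw [hdg, Fin.prod_univ_two, Fin.prod_univ_two]
  refine ⟨Polynomial.natDegree_mul_le_of_le (h 0) (h 1), ?_⟩
  rw [Polynomial.coeff_mul_add_eq_of_natDegree_le (h 0) (h 1), h2, h2]

lemma aux_lead (P : MvPolynomial (Fin 2) ℂ) (d : ℕ) (hdeg : P.totalDegree ≤ d)
    (f : Fin 2 → Polynomial ℂ) (hf : ∀ i, (f i).natDegree ≤ 1) :
    (aeval f P).natDegree ≤ d ∧
    (aeval f P).coeff d = eval (fun i => (f i).coeff 1) (homogeneousComponent d P) := by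
  have hm : ∀ m ∈ P.support, m.degree ≤ d := fun m hm =>
    le_trans (le_totalDegree hm) hdeg
  rw [aeval_def, eval₂_eq']
  constructor
  · refine Polynomial.natDegree_sum_le_of_forall_le _ _ fun m h => ?_
    refine le_trans (Polynomial.natDegree_C_mul_le _ _) ((aux_term f hf m).1.trans (hm m h))
  · rw [Polynomial.finsetSum_coeff, homogeneousComponent_apply, map_sum, Finset.sum_filter]
    refine Finset.sum_congr rfl fun m h => ?_
    rw [show (algebraMap ℂ (Polynomial ℂ)) (coeff m P) = Polynomial.C (coeff m P) from rfl,
      Polynomial.coeff_C_mul]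
    split_ifs with hd
    · subst hd
      rw [(aux_term f hf m).2, eval_monomial, Finsupp.prod_fintype _ _ (by simp)]
    · rw [Polynomial.coeff_eq_zero_of_natDegree_lt, mul_zero]
      exact lt_of_le_of_lt (aux_term f hf m).1 (lt_of_le_of_ne (hm m h) hd)

lemma aux_lim (P : MvPolynomial (Fin 2) ℂ) (d : ℕ) (hdeg : P.totalDegree ≤ d)
    (z : Fin 2 → ℂ) (hz : eval z (homogeneousComponent d P) = 0) (η : ℝ) (hη : 0 < η) :
    ∃ l₀ > 0, ∀ l : ℝ, 0 < l → l < l₀ →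
      ‖(l : ℂ) ^ d * eval (fun i => z i / (l : ℂ)) P‖ < η := by
  have hm : ∀ m ∈ P.support, m.degree ≤ d := fun m hm =>
    le_trans (le_totalDegree hm) hdeg
  let g : ℝ → ℂ := fun l => ∑ m ∈ P.support, (l : ℂ) ^ (d - m.degree) * (coeff m P * ∏ i, z i ^ m i)
  have hg : Continuous g := by
    unfold g; fun_prop
  have hg0 : g 0 = 0 := by
    rw [← hz, homogeneousComponent_apply, map_sum, Finset.sum_filter]
    refine Finset.sum_congr rfl fun m h => ?_
    split_ifs with hd
    · rw [eval_monomial, Finsupp.prod_fintype _ _ (by simp)]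
      simp [hd]
    · have := hm m h
      have : d - m.degree ≠ 0 := by omega
      simp [this]
  obtain ⟨δ, hδ, H⟩ := Metric.continuousAt_iff.1 (hg.continuousAt (x := 0)) η hη
  refine ⟨δ, hδ, fun l hl hl' => ?_⟩
  have h1 := H (x := l) (by simpa [abs_of_pos hl] using hl')
  rw [hg0, dist_zero_right] at h1
  refine lt_of_eq_of_lt (congrArg norm ?_) h1
  rw [eval_eq', Finset.mul_sum]
  refine Finset.sum_congr rfl fun m h => ?_
  have hl0 : (l : ℂ) ≠ 0 := by exact_mod_cast hl.ne'
  have hdg : m.degree = m 0 + m 1 := by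
    simp [Finsupp.degree_eq_sum]
  have := hm m h
  obtain ⟨k, hk⟩ := Nat.exists_eq_add_of_le this
  have hk2 : d - m.degree = k := by omega
  rw [hk2, hk, hdg, Fin.prod_univ_two, Fin.prod_univ_two, div_pow, div_pow, pow_add, pow_add]
  field_simp

lemma aux_roots (s : Multiset ℂ) (r : ℝ) (hr : 0 ≤ r) (h : ∀ a ∈ s, r ≤ ‖a‖) :
    r ^ s.card ≤ ‖(s.map fun a => 0 - a).prod‖ := by
  induction s using Multiset.induction_on with
  | empty => simp
  | cons a s ih =>
    have h1 := ih fun b hb => h b (Multiset.mem_cons_of_mem hb)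
    have h2 := h a (Multiset.mem_cons_self a s)
    simp only [Multiset.card_cons, Multiset.map_cons, Multiset.prod_cons, norm_mul, zero_sub,
      norm_neg, pow_succ'] at h1 ⊢
    gcongr

/-- Every nonzero point of the zero set of the top homogeneous component `P_d`
is a limit of points of the rescaled zero sets `λ·Z(P)` as `λ → 0`. -/
theorem stmt_4 (P : MvPolynomial (Fin 2) ℂ) (hP : P ≠ 0) (d : ℕ) (hd : 1 ≤ d)
    (hdeg : P.totalDegree = d)
    (z : EuclideanSpace ℂ (Fin 2)) (hz : z ∈ zeroSet (homogeneousComponent d P))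
    (hz0 : z ≠ 0) (ε : ℝ) (hε : 0 < ε) :
    ∃ lam₀ > 0, ∀ lam : ℝ, 0 < lam → lam < lam₀ →
      ∃ w ∈ zeroSet P, ‖lam • w - z‖ < ε := by
  have hne : homogeneousComponent d P ≠ 0 := by
    intro h0
    obtain ⟨m, hm, hmd⟩ := Finset.exists_mem_eq_sup P.support (support_nonempty.2 hP)
      (fun m => m.sum fun _ e => e)
    have hmd' : m.degree = d := by
      rw [← hdeg]
      exact hmd.symm
    have := coeff_homogeneousComponent d P m
    rw [h0, if_pos hmd'] at this
    exact (mem_support_iff.1 hm) (by simpa using this.symm)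
  obtain ⟨v, hv⟩ : ∃ v : Fin 2 → ℂ, eval v (homogeneousComponent d P) ≠ 0 := by
    by_contra! h
    exact hne (MvPolynomial.funext fun x => by simpa using h x)
  set c := eval v (homogeneousComponent d P) with hc
  let V : EuclideanSpace ℂ (Fin 2) := WithLp.toLp 2 v
  let δ : ℝ := ε / (‖V‖ + 1)
  have hδ : 0 < δ := by positivity
  have hcpos : 0 < ‖c‖ := norm_pos_iff.2 hv
  obtain ⟨l₀, hl₀, H⟩ := aux_lim P d hdeg.le (fun i => z i) hz (‖c‖ * δ ^ d) (by positivity)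
  refine ⟨l₀, hl₀, fun l hl hl' => ?_⟩
  have hl0 : (l : ℂ) ≠ 0 := by exact_mod_cast hl.ne'
  have H1 := H l hl hl'
  let f : Fin 2 → Polynomial ℂ := fun i => Polynomial.C (v i) * Polynomial.X + Polynomial.C (z i / l)
  obtain ⟨h1, h2⟩ := aux_lead P d hdeg.le f fun i => Polynomial.natDegree_linear_le
  have hfc : (fun i => (f i).coeff 1) = v := by
    funext i
    simp [f, Polynomial.coeff_C]
  rw [hfc, ← hc] at h2
  set q := aeval f P with hq
  have hev : ∀ s : ℂ, q.eval s = eval (fun i => v i * s + z i / l) P := by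
    intro s
    rw [hq, ← Polynomial.coe_evalRingHom, aeval_def, hom_eval₂]
    have : (Polynomial.evalRingHom s).comp (algebraMap ℂ (Polynomial ℂ)) = RingHom.id ℂ := by
      ext x; simp
    rw [this, eval₂_id]
    congr 2
    funext i
    simp [f]
  have hnd : q.natDegree = d :=
    le_antisymm h1 (Polynomial.le_natDegree_of_ne_zero (by rw [h2]; exact hv))
  have hlead : q.leadingCoeff = c := by rw [Polynomial.leadingCoeff, hnd, h2]
  have hq0 : q ≠ 0 := by
    intro h; rw [h] at h2; exact hv (by simpa using h2.symm)
  have hsp : q.Splits := IsAlgClosed.splits q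
  obtain ⟨s, hs, hsδ⟩ : ∃ s ∈ q.roots, ‖s‖ < δ / l := by
    by_contra! hcon
    have h3 := aux_roots q.roots (δ / l) (by positivity) hcon
    have hcard : q.roots.card = d := by rw [← hnd, hsp.natDegree_eq_card_roots]
    have h4 := hsp.eval_eq_prod_roots 0
    rw [hlead, hev] at h4
    simp only [mul_zero, zero_add] at h4
    rw [h4, norm_mul, norm_mul, norm_pow, Complex.norm_real, Real.norm_of_nonneg hl.le] at H1
    rw [hcard] at h3
    have h5 : l ^ d * (‖c‖ * (δ / l) ^ d) ≤ _ := 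
      mul_le_mul_of_nonneg_left (mul_le_mul_of_nonneg_left h3 hcpos.le) (pow_nonneg hl.le d)
    have h6 : l ^ d * (‖c‖ * (δ / l) ^ d) = ‖c‖ * δ ^ d := by
      rw [div_pow]; field_simp
    linarith
  refine ⟨s • V + (l : ℂ)⁻¹ • z, ?_, ?_⟩
  · have := (Polynomial.mem_roots hq0).1 hs
    rw [Polynomial.IsRoot, hev] at this
    change eval _ P = 0
    convert this using 3 with i
    simp [V, div_eq_inv_mul, mul_comm]
  · have : l • (s • V + (l : ℂ)⁻¹ • z) - z = (l * s : ℂ) • V := by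
      ext i
      simp
      field_simp
      ring
    rw [this, norm_smul, norm_mul, Complex.norm_real, Real.norm_of_nonneg hl.le]
    have h7 : l * ‖s‖ < δ := by rwa [lt_div_iff₀' hl] at hsδ
    calc l * ‖s‖ * ‖V‖ ≤ δ * ‖V‖ := by gcongr
      _ < δ * (‖V‖ + 1) := by nlinarith
      _ = ε := by simp only [δ]; field_simp
end

section
/- Let P be a nonzero polynomial in two variables over ℂ with P(0,0) = 0, and let k ≥ 1 be the smallest integer such that the homogeneous component P_k of P of degree k is nonzero. For every ε > 0 and R > 0 there exists λ₀ > 0 such that for all λ > λ₀: every point z of the rescaled zero set λ·Z(P) = {λw : w ∈ Z(P)} with ‖z‖ ≤ R satisfies dist(z, Z(P_k)) < ε. -/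
open MvPolynomial

theorem eval_smul_of_homog {Q : MvPolynomial (Fin 2) ℂ} {n : ℕ} (hQ : Q.IsHomogeneous n)
    (c : ℂ) (x : Fin 2 → ℂ) :
    MvPolynomial.eval (fun i => c * x i) Q = c ^ n * MvPolynomial.eval x Q := by
  rw [eval_eq', eval_eq', Finset.mul_sum]
  refine Finset.sum_congr rfl fun d hd => ?_
  have h := hQ (mem_support_iff.1 hd)
  have h2 : d 0 + d 1 = n := by
    rw [← h, Finsupp.weight_apply, Finsupp.sum_fintype _ _ (by simp)]
    simp
  simp only [Fin.prod_univ_two, mul_pow, ← h2, pow_add]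
  ring

/-- If `P` vanishes at the origin and `k ≥ 1` is minimal with the degree-`k`
homogeneous component `P_k` nonzero, then for every `ε, R > 0` there is `λ₀ > 0` such that for
all `λ > λ₀`, every point of `λ·Z(P)` of norm at most `R` is within distance `ε` of `Z(P_k)`. -/
theorem stmt_5 (P : MvPolynomial (Fin 2) ℂ) (hP : P ≠ 0)
    (h0 : MvPolynomial.eval (fun _ => (0 : ℂ)) P = 0)
    (k : ℕ) (hk : 1 ≤ k) (hk0 : homogeneousComponent k P ≠ 0)
    (hmin : ∀ j : ℕ, j < k → homogeneousComponent j P = 0)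
    (ε R : ℝ) (hε : 0 < ε) (hR : 0 < R) :
    ∃ lam₀ > 0, ∀ lam : ℝ, lam₀ < lam →
      ∀ w : EuclideanSpace ℂ (Fin 2), w ∈ zeroSet P → ‖lam • w‖ ≤ R →
        Metric.infDist (lam • w) (zeroSet (homogeneousComponent k P)) < ε := by
  classical
  let ev : MvPolynomial (Fin 2) ℂ → EuclideanSpace ℂ (Fin 2) → ℂ := fun Q z => MvPolynomial.eval (fun i => z i) Q
  have hevc : ∀ Q, Continuous (ev Q) := by
    intro Q
    have h1 : Continuous (fun x : Fin 2 → ℂ => MvPolynomial.eval x Q) :=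
      MvPolynomial.continuous_eval Q
    have h2 : Continuous (fun z : EuclideanSpace ℂ (Fin 2) => (fun i => z i : Fin 2 → ℂ)) := by fun_prop
    exact h1.comp h2
  let G : ℝ → EuclideanSpace ℂ (Fin 2) → ℂ := fun t z =>
    ∑ j ∈ Finset.range (P.totalDegree + 1), (t : ℂ) ^ (j - k) * ev (homogeneousComponent j P) z
  have hGc : Continuous (fun p : ℝ × EuclideanSpace ℂ (Fin 2) => G p.1 p.2) := by
    refine continuous_finsetSum _ fun j _ => ?_
    refine Continuous.mul ?_ ((hevc _).comp continuous_snd)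
    exact (Complex.continuous_ofReal.comp continuous_fst).pow _
  have hkd : k ∈ Finset.range (P.totalDegree + 1) := by
    rw [Finset.mem_range]
    by_contra hcon
    exact hk0 (homogeneousComponent_eq_zero _ _ (by omega))
  have hG0 : ∀ z, G 0 z = ev (homogeneousComponent k P) z := by
    intro z
    show ∑ j ∈ Finset.range (P.totalDegree + 1), _ = _
    rw [Finset.sum_eq_single_of_mem k hkd]
    · simp
    · intro j _ hjk
      rcases lt_or_gt_of_ne hjk with h | h
      · rw [hmin j h]; simp [ev]
      · have : j - k ≠ 0 := by omega
        simp [this]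
  let K : Set (EuclideanSpace ℂ (Fin 2)) := Metric.closedBall 0 R ∩
    {z | ε ≤ Metric.infDist z (zeroSet (homogeneousComponent k P))}
  have hK : IsCompact K := by
    refine (isCompact_closedBall _ _).inter_right ?_
    exact isClosed_le continuous_const (Metric.continuous_infDist_pt _)
  have hev : ∀ᶠ t in nhds (0 : ℝ), ∀ z ∈ K, G t z ≠ 0 := by
    refine hK.eventually_forall_of_forall_eventually ?_
    intro z hz
    have hne : G 0 z ≠ 0 := by
      rw [hG0]
      intro h
      have hz2 : ε ≤ Metric.infDist z (zeroSet (homogeneousComponent k P)) := hz.2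
      rw [Metric.infDist_zero_of_mem (show z ∈ zeroSet _ from h)] at hz2
      linarith
    exact hGc.continuousAt.eventually_ne (y := 0) (x := ((0 : ℝ), z)) hne
  obtain ⟨δ, hδ, hball⟩ := Metric.eventually_nhds_iff.1 hev
  refine ⟨δ⁻¹, inv_pos.2 hδ, fun lam hlam w hw hwR => ?_⟩
  have hlpos : 0 < lam := (inv_pos.2 hδ).trans hlam
  by_contra hcon
  push Not at hcon
  have hzK : lam • w ∈ K := ⟨by simpa using hwR, hcon⟩
  have hd : dist lam⁻¹ 0 < δ := by
    rw [Real.dist_eq, sub_zero, abs_of_pos (inv_pos.2 hlpos)]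
    exact inv_lt_of_inv_lt₀ hδ hlam
  refine hball hd _ hzK ?_
  have hlc : (lam : ℂ) ≠ 0 := by exact_mod_cast hlpos.ne'
  have hterm : ∀ j, ((lam⁻¹ : ℝ) : ℂ) ^ (j - k) * ev (homogeneousComponent j P) (lam • w)
      = (lam : ℂ) ^ k * ev (homogeneousComponent j P) w := by
    intro j
    by_cases hj : j < k
    · rw [hmin j hj]; simp [ev]
    · have h1 : ev (homogeneousComponent j P) (lam • w)
          = (lam : ℂ) ^ j * ev (homogeneousComponent j P) w := by
        rw [← eval_smul_of_homog (homogeneousComponent_isHomogeneous j P)]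
        simp [ev]
      obtain ⟨m, rfl⟩ := Nat.exists_eq_add_of_le (not_lt.1 hj)
      rw [h1, Nat.add_sub_cancel_left]
      push_cast
      rw [pow_add, inv_pow]
      field_simp
  show ∑ j ∈ Finset.range (P.totalDegree + 1), _ = _
  rw [Finset.sum_congr rfl fun j _ => hterm j, ← Finset.mul_sum]
  have hsum : ∑ j ∈ Finset.range (P.totalDegree + 1), ev (homogeneousComponent j P) w = ev P w := by
    conv_rhs => rw [← sum_homogeneousComponent P]
    simp only [ev, map_sum]
  rw [hsum, show ev P w = 0 from hw, mul_zero]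
end

section
/- Let a, b ∈ ℝ and define F : ℝ² \ {0} → ℂ² by F(x₁,x₂) = ( x₁ + i(a x₁ + b x₂)/r² , x₂ + i(a x₂ − b x₁)/r² ), where r² = x₁² + x₂². Then at every point of ℝ² \ {0}: (i) ω(∂₁F, ∂₂F) = 0, so the image of F is Lagrangian; (ii) the complex determinant det_ℂ(∂₁F, ∂₂F) = (∂₁F)₁(∂₂F)₂ − (∂₁F)₂(∂₂F)₁ equals 1 + (a² + b²)/r⁴, which is real and positive. Hence F is an immersion whose image is a special Lagrangian with Lagrangian angle 0. -/
/-- The standard symplectic form `ω(u,v) = Im⟨u,v⟩ = Σⱼ Im(conj(uⱼ)·vⱼ)` on `ℂ²`. -/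
noncomputable def omega2 (u v : ℂ × ℂ) : ℝ :=
  ((starRingEnd ℂ) u.1 * v.1 + (starRingEnd ℂ) u.2 * v.2).im

/-- The parametrisation `F(x₁,x₂) = (x₁ + i(ax₁+bx₂)/r², x₂ + i(ax₂−bx₁)/r²)` of the
two-dimensional Lawlor neck `L_{π/2}(a+ib)`. -/
noncomputable def Fneck (a b : ℝ) (x : ℝ × ℝ) : ℂ × ℂ :=
  ((x.1 : ℂ) + Complex.I * (((a * x.1 + b * x.2) / (x.1 ^ 2 + x.2 ^ 2) : ℝ) : ℂ),
   (x.2 : ℂ) + Complex.I * (((a * x.2 - b * x.1) / (x.1 ^ 2 + x.2 ^ 2) : ℝ) : ℂ))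

/-- Derivative of `(c x₁ + d x₂)/r²`. -/
lemma quot_hasFDerivAt (c d : ℝ) (x : ℝ × ℝ) (h : x.1 ^ 2 + x.2 ^ 2 ≠ 0) :
    HasFDerivAt (fun y : ℝ × ℝ => (c * y.1 + d * y.2) / (y.1 ^ 2 + y.2 ^ 2))
      (((c * (x.1 ^ 2 + x.2 ^ 2) - (c * x.1 + d * x.2) * (2 * x.1)) / (x.1 ^ 2 + x.2 ^ 2) ^ 2) •
          ContinuousLinearMap.fst ℝ ℝ ℝ
        + ((d * (x.1 ^ 2 + x.2 ^ 2) - (c * x.1 + d * x.2) * (2 * x.2)) / (x.1 ^ 2 + x.2 ^ 2) ^ 2) •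
          ContinuousLinearMap.snd ℝ ℝ ℝ) x := by
  have h1 : HasFDerivAt (fun y : ℝ × ℝ => y.1) (ContinuousLinearMap.fst ℝ ℝ ℝ) x := hasFDerivAt_fst
  have h2 : HasFDerivAt (fun y : ℝ × ℝ => y.2) (ContinuousLinearMap.snd ℝ ℝ ℝ) x := hasFDerivAt_snd
  have hn := (h1.const_mul c).add (h2.const_mul d)
  have hd := (h1.pow 2).add (h2.pow 2)
  have hq := hn.mul ((hasDerivAt_inv h).comp_hasFDerivAt x hd)
  refine (hq.congr_fderiv ?_).congr_of_eventuallyEq (Filter.Eventually.of_forall fun y => ?_)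
  · ext <;> simp <;> field_simp <;> ring
  · simp [div_eq_mul_inv]

/-- At every point of `ℝ² \ {0}`, `F` is differentiable, `ω(∂₁F, ∂₂F) = 0` (so the
image of `F` is Lagrangian), and `det_ℂ(∂₁F, ∂₂F) = 1 + (a²+b²)/r⁴`, which is real and
positive. -/
theorem stmt_8 (a b : ℝ) (x : ℝ × ℝ) (hx : x ≠ 0) :
    DifferentiableAt ℝ (Fneck a b) x ∧
    omega2 (fderiv ℝ (Fneck a b) x (1, 0)) (fderiv ℝ (Fneck a b) x (0, 1)) = 0 ∧
    (fderiv ℝ (Fneck a b) x (1, 0)).1 * (fderiv ℝ (Fneck a b) x (0, 1)).2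
      - (fderiv ℝ (Fneck a b) x (1, 0)).2 * (fderiv ℝ (Fneck a b) x (0, 1)).1
      = 1 + (((a ^ 2 + b ^ 2) / (x.1 ^ 2 + x.2 ^ 2) ^ 2 : ℝ) : ℂ) ∧
    0 < 1 + (a ^ 2 + b ^ 2) / (x.1 ^ 2 + x.2 ^ 2) ^ 2 := by
  have hr : 0 < x.1 ^ 2 + x.2 ^ 2 := by
    rcases (not_and_or.mp (fun h : x.1 = 0 ∧ x.2 = 0 => hx (Prod.ext h.1 h.2))) with h | h
    · positivity
    · positivity
  have h1 : HasFDerivAt (fun y : ℝ × ℝ => y.1) (ContinuousLinearMap.fst ℝ ℝ ℝ) x := hasFDerivAt_fst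
  have h2 : HasFDerivAt (fun y : ℝ × ℝ => y.2) (ContinuousLinearMap.snd ℝ ℝ ℝ) x := hasFDerivAt_snd
  have hp := quot_hasFDerivAt a b x hr.ne'
  have hq := quot_hasFDerivAt (-b) a x hr.ne'
  have hF := ((Complex.ofRealCLM.hasFDerivAt.comp x h1).add
      ((Complex.ofRealCLM.hasFDerivAt.comp x hp).const_mul Complex.I)).prodMk
    ((Complex.ofRealCLM.hasFDerivAt.comp x h2).add
      ((Complex.ofRealCLM.hasFDerivAt.comp x hq).const_mul Complex.I))
  replace hF := hF.congr_of_eventuallyEq (f₁ := Fneck a b) (Filter.Eventually.of_forall fun y => by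
    have e : a * y.2 - b * y.1 = -b * y.1 + a * y.2 := by ring
    simp only [Fneck, e]
    rfl)
  refine ⟨hF.differentiableAt, ?_, ?_, by positivity⟩
  · rw [hF.fderiv]
    simp [omega2, -Complex.ofReal_div]
    field_simp
    ring
  · rw [hF.fderiv]
    have hc : (x.1 : ℂ) ^ 2 + (x.2 : ℂ) ^ 2 ≠ 0 := by exact_mod_cast hr.ne'
    simp
    field_simp
    ring_nf
    simp only [Complex.I_sq]
    ring
end

section
/- Let a, b ∈ ℝ, let F : ℝ² \ {0} → ℂ² be F(x₁,x₂) = ( x₁ + i(a x₁ + b x₂)/r² , x₂ + i(a x₂ − b x₁)/r² ) with r² = x₁² + x₂², and let R : ℂ² → ℂ² be the ℝ-linear map R(z₁, z₂) = ( Re z₁ + i·Re z₂ , Im z₁ − i·Im z₂ ). Then for every (x₁,x₂) ≠ 0, the point (w₁, w₂) = R(F(x₁,x₂)) satisfies w₁·w₂ = a + ib. In particular R maps the image of F into the complex curve {(w₁,w₂) ∈ ℂ² : w₁w₂ = a + ib}. -/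
/-- The hyperkähler rotation `R(z₁,z₂) = (Re z₁ + i·Re z₂, Im z₁ − i·Im z₂)` of `ℂ²`. -/
noncomputable def HKrot (z : ℂ × ℂ) : ℂ × ℂ :=
  ((z.1.re : ℂ) + (z.2.re : ℂ) * Complex.I, (z.1.im : ℂ) - (z.2.im : ℂ) * Complex.I)

/-- For every `(x₁,x₂) ≠ 0`, the point `(w₁,w₂) = R(F(x₁,x₂))` satisfies
`w₁·w₂ = a + ib`; i.e. the hyperkähler rotation `R` maps the image of `F` into the complex
curve `{w₁w₂ = a + ib}`. -/
theorem stmt_9 (a b : ℝ) (x : ℝ × ℝ) (hx : x ≠ 0) :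
    (HKrot (Fneck a b x)).1 * (HKrot (Fneck a b x)).2 = (a : ℂ) + (b : ℂ) * Complex.I := by
  obtain ⟨p, q⟩ := x
  have hr : p ^ 2 + q ^ 2 ≠ 0 := by
    intro h
    apply hx
    have hp : p = 0 := by nlinarith [sq_nonneg p, sq_nonneg q]
    have hq : q = 0 := by nlinarith [sq_nonneg p, sq_nonneg q]
    simp [hp, hq]
  apply Complex.ext
  · simp [HKrot, Fneck, -Complex.ofReal_div, -Complex.ofReal_add, -Complex.ofReal_mul,
      -Complex.ofReal_sub, -Complex.ofReal_pow]
    field_simp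
    ring
  · simp [HKrot, Fneck, -Complex.ofReal_div, -Complex.ofReal_add, -Complex.ofReal_mul,
      -Complex.ofReal_sub, -Complex.ofReal_pow]
    field_simp
    ring
end

section
/- Let a, b ∈ ℝ and let F : ℝ² \ {0} → ℂ² be F(x₁,x₂) = ( x₁ + i(a x₁ + b x₂)/r² , x₂ + i(a x₂ − b x₁)/r² ) with r² = x₁² + x₂². Let γ(t) = F(cos t, sin t) for t ∈ [0, 2π]. Then ∫₀^{2π} λ_{γ(t)}(γ'(t)) dt = 4πb, where λ_z(v) = Im⟨z,v⟩ is the Liouville form. Consequently, if b ≠ 0 then there is no differentiable function g : ℝ² \ {0} → ℝ with dg_x(v) = λ_{F(x)}(dF_x(v)) for all x and v, i.e. the pullback F*λ of the Liouville form is not exact; the Lagrangian L_{π/2}(a+ib) is exact if and only if b = 0. -/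
theorem sq_ne {x : ℝ × ℝ} (hx : x ≠ 0) : x.1 ^ 2 + x.2 ^ 2 ≠ 0 := by
  intro h
  apply hx
  ext
  · simp only [Prod.fst_zero]; nlinarith [sq_nonneg x.1, sq_nonneg x.2]
  · simp only [Prod.snd_zero]; nlinarith [sq_nonneg x.1, sq_nonneg x.2]

theorem curve_aux (a b : ℝ) (u v : ℝ → ℝ) (u' v' t : ℝ) (hu : HasDerivAt u u' t)
    (hv : HasDerivAt v v' t) (h : u t ^ 2 + v t ^ 2 ≠ 0) :
    ∃ w, HasDerivAt (fun s => Fneck a b (u s, v s)) w t ∧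
      omega2 (Fneck a b (u t, v t)) w =
        -2 * (a * (u t * u' + v t * v') + b * (v t * u' - u t * v')) / (u t ^ 2 + v t ^ 2) := by
  have hr := (hu.pow 2).add (hv.pow 2)
  have h1 := (((hu.const_mul a).add (hv.const_mul b)).div hr h).ofReal_comp
  have h2 := (((hv.const_mul a).sub (hu.const_mul b)).div hr h).ofReal_comp
  refine ⟨_, (hu.ofReal_comp.add (h1.const_mul Complex.I)).prodMk
    (hv.ofReal_comp.add (h2.const_mul Complex.I)), ?_⟩
  simp only [omega2, Fneck, Complex.add_im, Complex.mul_im, Complex.mul_re, Complex.conj_re,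
    Complex.conj_im, Complex.add_re, Complex.ofReal_re, Complex.ofReal_im, Complex.I_re,
    Complex.I_im, Pi.add_apply, Pi.pow_apply, Pi.sub_apply]
  field_simp
  ring

theorem diff_aux (a b : ℝ) (x : ℝ × ℝ) (hx : x ≠ 0) : DifferentiableAt ℝ (Fneck a b) x := by
  have h := sq_ne hx
  have hr : DifferentiableAt ℝ (fun x : ℝ × ℝ => x.1 ^ 2 + x.2 ^ 2) x := by fun_prop
  have h1 : DifferentiableAt ℝ
      (fun x : ℝ × ℝ => (a * x.1 + b * x.2) / (x.1 ^ 2 + x.2 ^ 2)) x :=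
    by fun_prop (disch := exact h)
  have h2 : DifferentiableAt ℝ
      (fun x : ℝ × ℝ => (a * x.2 - b * x.1) / (x.1 ^ 2 + x.2 ^ 2)) x :=
    by fun_prop (disch := exact h)
  have c : ∀ f : ℝ × ℝ → ℝ, DifferentiableAt ℝ f x →
      DifferentiableAt ℝ (fun y => (f y : ℂ)) x := fun f hf =>
    (Complex.ofRealCLM.differentiableAt).comp x hf
  exact ((c _ differentiableAt_fst).add ((c _ h1).const_mul Complex.I)).prodMk
    ((c _ differentiableAt_snd).add ((c _ h2).const_mul Complex.I))

theorem pull_aux (a b : ℝ) (x : ℝ × ℝ) (hx : x ≠ 0) (v : ℝ × ℝ) :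
    omega2 (Fneck a b x) (fderiv ℝ (Fneck a b) x v) =
      -2 * (a * (x.1 * v.1 + x.2 * v.2) + b * (x.2 * v.1 - x.1 * v.2)) /
        (x.1 ^ 2 + x.2 ^ 2) := by
  have l : ∀ p q : ℝ, HasDerivAt (fun t : ℝ => p + t * q) q 0 := fun p q => by
    simpa using ((hasDerivAt_id (0 : ℝ)).mul_const q).const_add p
  obtain ⟨w, hw, hw2⟩ := curve_aux a b (fun t => x.1 + t * v.1) (fun t => x.2 + t * v.2)
    v.1 v.2 0 (l _ _) (l _ _) (by simpa using sq_ne hx)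
  have hF : HasFDerivAt (Fneck a b) (fderiv ℝ (Fneck a b) x)
      (x.1 + 0 * v.1, x.2 + 0 * v.2) := by
    simpa using (diff_aux a b x hx).hasFDerivAt
  have h3 := hF.comp_hasDerivAt (0 : ℝ) ((l x.1 v.1).prodMk (l x.2 v.2))
  have h4 := hw.unique h3
  rw [h4] at hw2
  simpa using hw2

theorem no_prim (a b : ℝ) (hg : ∃ g : ℝ × ℝ → ℝ, ∀ x : ℝ × ℝ, x ≠ 0 →
        DifferentiableAt ℝ g x ∧
        ∀ v : ℝ × ℝ, fderiv ℝ g x v = omega2 (Fneck a b x) (fderiv ℝ (Fneck a b) x v)) :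
    b = 0 := by
  obtain ⟨g, hg⟩ := hg
  have key : ∀ t : ℝ, HasDerivAt (fun t => g (Real.cos t, Real.sin t)) (2 * b) t := by
    intro t
    have hne : ((Real.cos t, Real.sin t) : ℝ × ℝ) ≠ 0 := by
      intro h
      have h1 := congrArg Prod.fst h
      have h2 := congrArg Prod.snd h
      simp only [Prod.fst_zero, Prod.snd_zero] at h1 h2
      have := Real.sin_sq_add_cos_sq t
      simp [h1, h2] at this
    obtain ⟨hd, hv⟩ := hg _ hne
    have h3 := hd.hasFDerivAt.comp_hasDerivAt t
      ((Real.hasDerivAt_cos t).prodMk (Real.hasDerivAt_sin t))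
    rw [hv, pull_aux a b _ hne] at h3
    simp only [Real.cos_sq_add_sin_sq] at h3
    refine h3.congr_deriv ?_
    linear_combination (2 * b) * Real.sin_sq_add_cos_sq t
  have hI := intervalIntegral.integral_eq_sub_of_hasDerivAt (a := 0) (b := 2 * Real.pi)
    (fun t _ => key t) (by simp)
  simp at hI
  exact hI

/-- The integral of the Liouville form over the loop `γ(t) = F(cos t, sin t)`
equals `4πb`; consequently if `b ≠ 0` the pullback `F*λ` admits no primitive on `ℝ² \ {0}`,
and `F*λ` admits such a primitive (`L_{π/2}(a+ib)` is exact) if and only if `b = 0`. -/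
theorem stmt_10 (a b : ℝ) :
    (∫ t in (0 : ℝ)..(2 * Real.pi),
        omega2 (Fneck a b (Real.cos t, Real.sin t))
          (deriv (fun s => Fneck a b (Real.cos s, Real.sin s)) t)) = 4 * Real.pi * b ∧
    (b ≠ 0 → ¬ ∃ g : ℝ × ℝ → ℝ, ∀ x : ℝ × ℝ, x ≠ 0 →
        DifferentiableAt ℝ g x ∧
        ∀ v : ℝ × ℝ, fderiv ℝ g x v = omega2 (Fneck a b x) (fderiv ℝ (Fneck a b) x v)) ∧
    ((∃ g : ℝ × ℝ → ℝ, ∀ x : ℝ × ℝ, x ≠ 0 →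
        DifferentiableAt ℝ g x ∧
        ∀ v : ℝ × ℝ, fderiv ℝ g x v = omega2 (Fneck a b x) (fderiv ℝ (Fneck a b) x v))
      ↔ b = 0) := by
  refine ⟨?_, fun hb h => hb (no_prim a b h), no_prim a b, ?_⟩
  · have : ∀ t : ℝ, omega2 (Fneck a b (Real.cos t, Real.sin t))
          (deriv (fun s => Fneck a b (Real.cos s, Real.sin s)) t) = 2 * b := by
      intro t
      obtain ⟨w, hw, hw2⟩ := curve_aux a b Real.cos Real.sin _ _ t (Real.hasDerivAt_cos t)
        (Real.hasDerivAt_sin t) (by simp)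
      rw [hw.deriv, hw2, Real.cos_sq_add_sin_sq]
      linear_combination (2 * b) * Real.sin_sq_add_cos_sq t
    simp only [this]
    simp
    ring
  · rintro rfl
    refine ⟨fun x => -a * Real.log (x.1 ^ 2 + x.2 ^ 2), fun x hx => ?_⟩
    have h := sq_ne hx
    have h1 : HasFDerivAt (fun x : ℝ × ℝ => x.1) (ContinuousLinearMap.fst ℝ ℝ ℝ) x :=
      hasFDerivAt_fst
    have h2 : HasFDerivAt (fun x : ℝ × ℝ => x.2) (ContinuousLinearMap.snd ℝ ℝ ℝ) x :=
      hasFDerivAt_snd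
    have hd := (((h1.pow 2).add (h2.pow 2)).log h).const_mul (-a)
    refine ⟨hd.differentiableAt, fun v => ?_⟩
    rw [pull_aux a 0 x hx]
    have e := hd.fderiv
    simp only [Pi.add_apply, Pi.pow_apply] at e
    rw [e]
    simp
    field_simp
    ring
end

section
/- Let a, b ∈ ℝ with (a,b) ≠ (0,0) and define G : ℝ² → ℂ² by G(x₁,x₂) = ( a x₁ − b x₂ + i(x₁² − x₂²) , a x₂ + b x₁ − 2i x₁ x₂ ). Then at every point of ℝ²: (i) ω(∂₁G, ∂₂G) = 0, so the image of G is Lagrangian; (ii) the complex determinant det_ℂ(∂₁G, ∂₂G) = (∂₁G)₁(∂₂G)₂ − (∂₁G)₂(∂₂G)₁ equals a² + b² + 4(x₁² + x₂²), which is real and positive; and (iii) G is injective. Hence G is an injective immersion whose image is an embedded special Lagrangian in ℂ² with Lagrangian angle 0, diffeomorphic to ℝ². -/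
/-- The parametrisation `G(x₁,x₂) = (ax₁ − bx₂ + i(x₁² − x₂²), ax₂ + bx₁ − 2ix₁x₂)` of the
special Lagrangian `L(a+ib)` asymptotic to a multiplicity two plane. -/
noncomputable def Gmap (a b : ℝ) (x : ℝ × ℝ) : ℂ × ℂ :=
  (((a * x.1 - b * x.2 : ℝ) : ℂ) + Complex.I * ((x.1 ^ 2 - x.2 ^ 2 : ℝ) : ℂ),
   ((a * x.2 + b * x.1 : ℝ) : ℂ) - 2 * Complex.I * ((x.1 * x.2 : ℝ) : ℂ))

/-- Derivative of `Gmap`. -/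
lemma Gmap_hasFDerivAt (a b : ℝ) (x : ℝ × ℝ) :
    ∃ L : ℝ × ℝ →L[ℝ] ℂ × ℂ, HasFDerivAt (Gmap a b) L x ∧
      L (1, 0) = (⟨a, 2 * x.1⟩, ⟨b, -2 * x.2⟩) ∧
      L (0, 1) = (⟨-b, -2 * x.2⟩, ⟨a, -2 * x.1⟩) := by
  have h1 : HasFDerivAt (fun x : ℝ × ℝ => x.1) (ContinuousLinearMap.fst ℝ ℝ ℝ) x := hasFDerivAt_fst
  have h2 : HasFDerivAt (fun x : ℝ × ℝ => x.2) (ContinuousLinearMap.snd ℝ ℝ ℝ) x := hasFDerivAt_snd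
  have c1 := Complex.ofRealCLM.hasFDerivAt.comp x ((h1.const_mul a).sub (h2.const_mul b))
  have c2 := Complex.ofRealCLM.hasFDerivAt.comp x ((h1.pow 2).sub (h2.pow 2))
  have c3 := Complex.ofRealCLM.hasFDerivAt.comp x ((h2.const_mul a).add (h1.const_mul b))
  have c4 := Complex.ofRealCLM.hasFDerivAt.comp x (h1.mul h2)
  have h := (c1.add (c2.const_mul Complex.I)).prodMk (c3.sub (c4.const_mul (2 * Complex.I)))
  refine ⟨_, h, ?_, ?_⟩
  · ext <;> simp <;> apply Complex.ext <;> simp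
  · ext <;> simp <;> apply Complex.ext <;> simp

/-- For `(a,b) ≠ (0,0)`, at every point of `ℝ²` the map `G` is differentiable
with `ω(∂₁G, ∂₂G) = 0` and `det_ℂ(∂₁G, ∂₂G) = a² + b² + 4(x₁² + x₂²)`, which is real and
positive; moreover `G` is injective. Hence `G` is an injective immersion whose image is an
embedded special Lagrangian with Lagrangian angle `0`. -/
theorem stmt_12 (a b : ℝ) (hab : (a, b) ≠ (0, 0)) :
    (∀ x : ℝ × ℝ,
      DifferentiableAt ℝ (Gmap a b) x ∧
      omega2 (fderiv ℝ (Gmap a b) x (1, 0)) (fderiv ℝ (Gmap a b) x (0, 1)) = 0 ∧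
      (fderiv ℝ (Gmap a b) x (1, 0)).1 * (fderiv ℝ (Gmap a b) x (0, 1)).2
        - (fderiv ℝ (Gmap a b) x (1, 0)).2 * (fderiv ℝ (Gmap a b) x (0, 1)).1
        = ((a ^ 2 + b ^ 2 + 4 * (x.1 ^ 2 + x.2 ^ 2) : ℝ) : ℂ) ∧
      0 < a ^ 2 + b ^ 2 + 4 * (x.1 ^ 2 + x.2 ^ 2)) ∧
    Function.Injective (Gmap a b) := by
  have hpos : 0 < a ^ 2 + b ^ 2 := by
    by_contra hn
    apply hab
    have ha : a = 0 := by nlinarith [sq_nonneg a, sq_nonneg b]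
    have hb : b = 0 := by nlinarith [sq_nonneg a, sq_nonneg b]
    rw [ha, hb]
  refine ⟨fun x => ?_, ?_⟩
  · obtain ⟨L, hL, e1, e2⟩ := Gmap_hasFDerivAt a b x
    refine ⟨hL.differentiableAt, ?_, ?_, by positivity⟩
    · rw [hL.fderiv, e1, e2]
      simp [omega2]
      ring
    · rw [hL.fderiv, e1, e2]
      apply Complex.ext
      · rw [Complex.ofReal_re]
        simp
        ring
      · rw [Complex.ofReal_im]
        simp
        ring
  · rintro ⟨x, y⟩ ⟨u, v⟩ h
    have r1 := congrArg (fun z : ℂ × ℂ => z.1.re) h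
    have r2 := congrArg (fun z : ℂ × ℂ => z.2.re) h
    simp only [Gmap, Complex.add_re, Complex.sub_re, Complex.mul_re, Complex.mul_im,
      Complex.ofReal_re, Complex.ofReal_im, Complex.I_re, Complex.I_im, Complex.re_ofNat,
      Complex.im_ofNat] at r1 r2
    have hx : (a ^ 2 + b ^ 2) * (x - u) = 0 := by linear_combination a * r1 + b * r2
    have hy : (a ^ 2 + b ^ 2) * (y - v) = 0 := by linear_combination a * r2 - b * r1
    have hx' := (mul_eq_zero.mp hx).resolve_left hpos.ne'
    have hy' := (mul_eq_zero.mp hy).resolve_left hpos.ne'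
    rw [sub_eq_zero.mp hx', sub_eq_zero.mp hy']
end

section
/- Let a, b ∈ ℝ, let G : ℝ² → ℂ² be G(x₁,x₂) = ( a x₁ − b x₂ + i(x₁² − x₂²) , a x₂ + b x₁ − 2i x₁ x₂ ), and let P_{π/2} = {(iu, iv) : u, v ∈ ℝ} ⊆ ℂ². Then for every x = (x₁,x₂) ∈ ℝ², with r² = x₁² + x₂²: dist(G(x), P_{π/2}) = √(a² + b²)·r, while ‖G(x)‖² = (a² + b²)r² + r⁴ ≥ r⁴; consequently dist(G(x), P_{π/2}) ≤ √(a² + b²) · ‖G(x)‖^{1/2}. In particular the image of G is asymptotic at infinity, with sublinear decay, to the Lagrangian plane P_{π/2} (which it approaches with multiplicity two). -/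
/-- The point of `ℂ²` (with the Euclidean metric) with coordinates `z, w`. -/
noncomputable def e2 (z w : ℂ) : EuclideanSpace ℂ (Fin 2) :=
  (WithLp.equiv 2 (Fin 2 → ℂ)).symm ![z, w]

/-- The parametrisation `G(x₁,x₂) = (ax₁ − bx₂ + i(x₁² − x₂²), ax₂ + bx₁ − 2ix₁x₂)`, valued in
Euclidean `ℂ²`. -/
noncomputable def GmapE (a b : ℝ) (x : ℝ × ℝ) : EuclideanSpace ℂ (Fin 2) :=
  e2 (((a * x.1 - b * x.2 : ℝ) : ℂ) + Complex.I * ((x.1 ^ 2 - x.2 ^ 2 : ℝ) : ℂ))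
     (((a * x.2 + b * x.1 : ℝ) : ℂ) - 2 * Complex.I * ((x.1 * x.2 : ℝ) : ℂ))

/-- The Lagrangian plane `P_{π/2} = iℝ² ⊆ ℂ²`. -/
def Ppi2 : Set (EuclideanSpace ℂ (Fin 2)) :=
  {p | ∃ u v : ℝ, p = e2 ((u : ℂ) * Complex.I) ((v : ℂ) * Complex.I)}

theorem e2_norm_sq (z w : ℂ) : ‖e2 z w‖ ^ 2 = z.re ^ 2 + z.im ^ 2 + (w.re ^ 2 + w.im ^ 2) := by
  rw [EuclideanSpace.norm_sq_eq, Fin.sum_univ_two]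
  simp only [e2, WithLp.equiv_symm_apply, Matrix.cons_val_zero, Matrix.cons_val_one,
    Complex.sq_norm, Complex.normSq_apply]
  ring

theorem e2_sub (z w z' w' : ℂ) : e2 z w - e2 z' w' = e2 (z - z') (w - w') := by
  ext i
  fin_cases i <;> simp [e2]

theorem G_norm_sq (a b : ℝ) (x : ℝ × ℝ) :
    ‖GmapE a b x‖ ^ 2 = (a ^ 2 + b ^ 2) * (x.1 ^ 2 + x.2 ^ 2) + (x.1 ^ 2 + x.2 ^ 2) ^ 2 := by
  rw [GmapE, e2_norm_sq]
  simp only [Complex.add_re, Complex.add_im, Complex.sub_re, Complex.sub_im, Complex.mul_re,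
    Complex.mul_im, Complex.I_re, Complex.I_im, Complex.ofReal_re, Complex.ofReal_im,
    Complex.re_ofNat, Complex.im_ofNat]
  ring

theorem G_dist_sq (a b : ℝ) (x : ℝ × ℝ) (u v : ℝ) :
    dist (GmapE a b x) (e2 ((u : ℂ) * Complex.I) ((v : ℂ) * Complex.I)) ^ 2
      = (a ^ 2 + b ^ 2) * (x.1 ^ 2 + x.2 ^ 2)
        + ((x.1 ^ 2 - x.2 ^ 2 - u) ^ 2 + (-2 * (x.1 * x.2) - v) ^ 2) := by
  rw [dist_eq_norm, GmapE, e2_sub, e2_norm_sq]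
  simp only [Complex.add_re, Complex.add_im, Complex.sub_re, Complex.sub_im, Complex.mul_re,
    Complex.mul_im, Complex.I_re, Complex.I_im, Complex.ofReal_re, Complex.ofReal_im,
    Complex.re_ofNat, Complex.im_ofNat]
  ring

theorem G_infDist (a b : ℝ) (x : ℝ × ℝ) :
    Metric.infDist (GmapE a b x) Ppi2
      = Real.sqrt (a ^ 2 + b ^ 2) * Real.sqrt (x.1 ^ 2 + x.2 ^ 2) := by
  rw [← Real.sqrt_mul (by positivity)]
  apply le_antisymm
  · have hm : e2 (((x.1 ^ 2 - x.2 ^ 2 : ℝ) : ℂ) * Complex.I)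
        (((-2 * (x.1 * x.2) : ℝ) : ℂ) * Complex.I) ∈ Ppi2 := ⟨_, _, rfl⟩
    refine (Metric.infDist_le_dist_of_mem hm).trans ?_
    apply Real.le_sqrt_of_sq_le
    rw [G_dist_sq]
    apply le_of_eq
    ring
  · have hne : Ppi2.Nonempty := ⟨_, 0, 0, rfl⟩
    refine (Metric.le_infDist hne).2 ?_
    rintro _ ⟨u, v, rfl⟩
    apply Real.sqrt_le_iff.2 ⟨dist_nonneg, ?_⟩
    rw [G_dist_sq]
    have : 0 ≤ (x.1 ^ 2 - x.2 ^ 2 - u) ^ 2 + (-2 * (x.1 * x.2) - v) ^ 2 := by positivity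
    linarith

/-- With `r² = x₁² + x₂²`, one has `dist(G(x), P_{π/2}) = √(a²+b²)·r` while
`‖G(x)‖² = (a²+b²)r² + r⁴ ≥ r⁴`; hence `dist(G(x), P_{π/2}) ≤ √(a²+b²)·‖G(x)‖^{1/2}`: the image
of `G` is asymptotic at infinity, with sublinear decay, to the plane `P_{π/2}`. -/
theorem stmt_14 (a b : ℝ) (x : ℝ × ℝ) :
    Metric.infDist (GmapE a b x) Ppi2
        = Real.sqrt (a ^ 2 + b ^ 2) * Real.sqrt (x.1 ^ 2 + x.2 ^ 2) ∧
    ‖GmapE a b x‖ ^ 2 = (a ^ 2 + b ^ 2) * (x.1 ^ 2 + x.2 ^ 2) + (x.1 ^ 2 + x.2 ^ 2) ^ 2 ∧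
    (x.1 ^ 2 + x.2 ^ 2) ^ 2 ≤ ‖GmapE a b x‖ ^ 2 ∧
    Metric.infDist (GmapE a b x) Ppi2
        ≤ Real.sqrt (a ^ 2 + b ^ 2) * ‖GmapE a b x‖ ^ ((1 : ℝ) / 2) := by
  have h3 : (x.1 ^ 2 + x.2 ^ 2) ^ 2 ≤ ‖GmapE a b x‖ ^ 2 := by
    rw [G_norm_sq]
    have : 0 ≤ (a ^ 2 + b ^ 2) * (x.1 ^ 2 + x.2 ^ 2) := by positivity
    linarith
  refine ⟨G_infDist a b x, G_norm_sq a b x, h3, ?_⟩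
  rw [G_infDist, ← Real.sqrt_eq_rpow]
  have h4 : x.1 ^ 2 + x.2 ^ 2 ≤ ‖GmapE a b x‖ := abs_le_of_sq_le_sq h3 (norm_nonneg _) |> le_trans (le_abs_self _)
  exact mul_le_mul_of_nonneg_left (Real.sqrt_le_sqrt h4) (Real.sqrt_nonneg _)
end
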